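/- Let n ≥ 2, let q : ℝ^n_+ → ℝ satisfy the cost-function conditions, let c ∈ ℝ^n_+, let f ∈ L^1_{I−c}(ℝ^n_+) ∩ C(ℝ^n_+), and fix p_0 > 0. Then for every z ∈ ℂ^n with Re z = c, writing s = z_1 + ⋯ + z_n, the Mellin transform in p of the profit function satisfies ∫_{ℝ^n_+} p^{z−I} (Π_q f)(p_0,p) dp = p_0^{s+1} Γ(s+2)^{−1} (Mf)(I−z) · (M e^{−q})(z), where Γ is the Gamma function. -/

import Mathlib

open MeasureTheory Complex Set

noncomputable section

/-- The positive orthant `ℝ^n_+`. -/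
def posOrth (n : ℕ) : Set (Fin n → ℝ) := {x | ∀ i, 0 < x i}

/-- `q` satisfies the cost-function conditions: `C¹` on `ℝ^n_+`, positive,
positively homogeneous of degree one, with bounded level sets. -/
def IsCostFun (n : ℕ) (q : (Fin n → ℝ) → ℝ) : Prop :=
  ContDiffOn ℝ 1 q (posOrth n) ∧
  (∀ x ∈ posOrth n, 0 < q x) ∧
  (∀ lam : ℝ, 0 < lam → ∀ x ∈ posOrth n, q (fun i => lam * x i) = lam * q x) ∧
  (∀ t : ℝ, Bornology.IsBounded {x | x ∈ posOrth n ∧ q x = t})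

/-- The `n`-dimensional Mellin transform `(Mg)(z) = ∫_{ℝ^n_+} x^{z-I} g(x) dx`. -/
def mellinT (n : ℕ) (g : (Fin n → ℝ) → ℝ) (z : Fin n → ℂ) : ℂ :=
  ∫ x in posOrth n, (∏ i, (x i : ℂ) ^ (z i - 1)) * g x

/-- Membership in `L¹_c(ℝ^n_+)`: measurable with `∫ |f| x^{c-I} < ∞`. -/
def MemL1w (n : ℕ) (c : Fin n → ℝ) (f : (Fin n → ℝ) → ℝ) : Prop :=
  IntegrableOn (fun x => f x * ∏ i, x i ^ (c i - 1)) (posOrth n)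

/-- The profit operator `(Π_q f)(p₀, p)`. -/
def Piq (n : ℕ) (q : (Fin n → ℝ) → ℝ) (f : (Fin n → ℝ) → ℝ)
    (p0 : ℝ) (p : Fin n → ℝ) : ℝ :=
  ∫ x in posOrth n, max 0 (p0 - q (fun i => p i * x i)) * f x

open Filter Topology

lemma aux_isOpen (n : ℕ) : IsOpen (posOrth n) := by
  have : posOrth n = Set.univ.pi (fun _ : Fin n => Set.Ioi (0:ℝ)) := by
    ext x; simp [posOrth]
  rw [this]
  exact isOpen_set_pi Set.finite_univ (fun _ _ => isOpen_Ioi)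

lemma aux_meas (n : ℕ) : MeasurableSet (posOrth n) := (aux_isOpen n).measurableSet

def aux_w (n : ℕ) (z : Fin n → ℂ) (x : Fin n → ℝ) : ℂ := ∏ i, (x i : ℂ) ^ (z i - 1)

lemma aux_w_mul (n : ℕ) (z : Fin n → ℂ) (x y : Fin n → ℝ) (hx : x ∈ posOrth n)
    (hy : y ∈ posOrth n) : aux_w n z (fun i => x i * y i) = aux_w n z x * aux_w n z y := by
  unfold aux_w
  rw [← Finset.prod_mul_distrib]
  refine Finset.prod_congr rfl fun i _ => ?_
  rw [Complex.ofReal_mul, Complex.mul_cpow_ofReal_nonneg (hx i).le (hy i).le]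

lemma aux_w_norm (n : ℕ) (z : Fin n → ℂ) (x : Fin n → ℝ) (hx : x ∈ posOrth n) :
    ‖aux_w n z x‖ = ∏ i, x i ^ ((z i).re - 1) := by
  unfold aux_w
  rw [norm_prod]
  refine Finset.prod_congr rfl fun i _ => ?_
  rw [Complex.norm_cpow_eq_rpow_re_of_pos (hx i)]
  simp

lemma aux_w_cont (n : ℕ) (z : Fin n → ℂ) : ContinuousOn (aux_w n z) (posOrth n) := by
  unfold aux_w
  refine continuousOn_finsetProd _ fun i _ => ?_
  intro x hx
  apply ContinuousAt.continuousWithinAt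
  have h := Complex.continuousAt_ofReal_cpow_const (x i) (z i - 1) (Or.inr (hx i).ne')
  exact ContinuousAt.comp (f := fun x : Fin n → ℝ => x i) (g := fun t : ℝ => (t : ℂ) ^ (z i - 1))
    h (continuous_apply i).continuousAt

/-- change of variables -/
lemma aux_cov {E : Type*} [NormedAddCommGroup E] [NormedSpace ℝ E] (n : ℕ) (a : Fin n → ℝ)
    (ha : a ∈ posOrth n) (g : (Fin n → ℝ) → E) :
    (∫ y in posOrth n, g y = (∏ i, a i) • ∫ p in posOrth n, g (fun i => a i * p i)) ∧
    (IntegrableOn g (posOrth n) → IntegrableOn (fun p => g (fun i => a i * p i)) (posOrth n)) := by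
  have hpos : 0 < ∏ i, a i := Finset.prod_pos fun i _ => ha i
  let e : (Fin n → ℝ) ≃ᵐ (Fin n → ℝ) :=
    MeasurableEquiv.piCongrRight fun i => (MeasurableEquiv.mulLeft₀ (a i) (ha i).ne')
  have he : ∀ p, e p = fun i => a i * p i := fun p => rfl
  have hvol : ENNReal.ofReal (∏ i, a i) • Measure.map e volume
      = (volume : Measure (Fin n → ℝ)) := by
    have := Real.smul_map_diagonal_volume_pi (D := a) (by
      rw [Matrix.det_diagonal]; exact hpos.ne')
    rw [Matrix.det_diagonal, abs_of_pos hpos] at this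
    convert this using 3
    funext p
    ext i
    simp [he, Matrix.mulVec_diagonal]
  have hpre : e ⁻¹' (posOrth n) = posOrth n := by
    ext p
    simp only [mem_preimage, he, posOrth, mem_ofPred_eq]
    exact forall_congr' fun i => by rw [mul_pos_iff_of_pos_left (ha i)]
  have hres : (volume : Measure (Fin n → ℝ)).restrict (posOrth n)
      = ENNReal.ofReal (∏ i, a i) • Measure.map e (volume.restrict (posOrth n)) := by
    conv_lhs => rw [← hvol]
    rw [Measure.restrict_smul, e.restrict_map, hpre]
  constructor
  · conv_lhs => rw [hres]
    rw [integral_smul_measure, ENNReal.toReal_ofReal hpos.le, e.measurableEmbedding.integral_map]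
    rfl
  · intro h
    unfold IntegrableOn at h
    rw [hres, integrable_smul_measure (by simpa using hpos) (by simp),
      e.measurableEmbedding.integrable_map_iff] at h
    exact h

lemma aux_fub {α β : Type*} [MeasurableSpace α] [MeasurableSpace β] (μ : Measure α)
    (ν : Measure β) [SFinite μ] [SFinite ν] (S : Set α) (T : Set β) (hT : MeasurableSet T)
    (F : α → β → ℂ)
    (hm : AEStronglyMeasurable (Function.uncurry F) ((μ.prod ν).restrict (S ×ˢ T)))
    (h1 : ∀ y ∈ T, IntegrableOn (fun x => F x y) S μ)
    (h2 : IntegrableOn (fun y => ∫ x in S, ‖F x y‖ ∂μ) T ν) :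
    ∫ x in S, ∫ y in T, F x y ∂ν ∂μ = ∫ y in T, ∫ x in S, F x y ∂μ ∂ν := by
  rw [← Measure.prod_restrict] at hm
  refine integral_integral_swap ?_
  rw [integrable_prod_iff' hm]
  exact ⟨(ae_restrict_iff' hT).2 (Eventually.of_forall h1), h2⟩

lemma aux_exp (a : ℝ) (ha : 0 < a) :
    ∫ t in Ioi (0:ℝ), Real.exp (-t) * max 0 (t - a) = Real.exp (-a) := by
  have h1 : ∫ t in Ioi (0:ℝ), Real.exp (-t) * max 0 (t - a)
      = ∫ t in Ioi a, Real.exp (-t) * (t - a) := by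
    rw [← integral_indicator measurableSet_Ioi, ← integral_indicator measurableSet_Ioi]
    congr 1
    funext t
    by_cases h : a < t
    · have h0 : 0 < t := ha.trans h
      simp [indicator, h, h0, max_eq_right (sub_pos.2 h).le]
    · simp only [indicator, mem_Ioi, h, if_false]
      rw [max_eq_left (by linarith)]
      simp
  rw [h1]
  have hd : ∀ x ∈ Ici a, HasDerivAt (fun t => - (Real.exp (-t) * (t - a + 1)))
      (Real.exp (-x) * (x - a)) x := by
    intro x _
    have h2 : HasDerivAt (fun t : ℝ => Real.exp (-t)) (Real.exp (-x) * (-1)) x :=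
      (hasDerivAt_neg x).exp
    have h3 : HasDerivAt (fun t : ℝ => t - a + 1) 1 x :=
      ((hasDerivAt_id x).sub_const a).add_const 1
    refine HasDerivAt.congr_deriv (h2.mul h3).neg ?_
    ring
  have ht : Tendsto (fun t => - (Real.exp (-t) * (t - a + 1))) atTop (𝓝 0) := by
    have h4 := Real.tendsto_pow_mul_exp_neg_atTop_nhds_zero 1
    have h5 := Real.tendsto_pow_mul_exp_neg_atTop_nhds_zero 0
    have := (h4.add (h5.const_mul (1 - a))).neg
    simp only [mul_zero, add_zero, neg_zero] at this
    refine this.congr fun t => ?_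
    simp only [pow_one, pow_zero]
    ring
  rw [integral_Ioi_of_hasDerivAt_of_nonneg' hd (fun x hx =>
    mul_nonneg (Real.exp_pos _).le (sub_nonneg.2 (le_of_lt hx))) ht]
  simp

def aux_h (n : ℕ) (q : (Fin n → ℝ) → ℝ) (z : Fin n → ℂ) (t : ℝ) (y : Fin n → ℝ) : ℂ :=
  aux_w n z y * ((max 0 (t - q y) : ℝ) : ℂ)

lemma aux_bound (n : ℕ) (q : (Fin n → ℝ) → ℝ) (hq : IsCostFun n q) :
    ∃ R : ℝ, 0 < R ∧ ∀ y ∈ posOrth n, ∀ i, y i ≤ R * q y := by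
  obtain ⟨_, h2, h3, h4⟩ := hq
  obtain ⟨R, hR, h⟩ := (h4 1).exists_pos_norm_le
  refine ⟨R, hR, fun y hy i => ?_⟩
  have hqy := h2 y hy
  have hi : 0 < (q y)⁻¹ := inv_pos.2 hqy
  have := h (fun i => (q y)⁻¹ * y i) ⟨fun i => mul_pos hi (hy i), by
    rw [h3 _ hi y hy, inv_mul_cancel₀ hqy.ne']⟩
  have h5 := (norm_le_pi_norm _ i).trans this
  simp only [Real.norm_eq_abs] at h5
  have h6 := (le_abs_self _).trans h5
  rwa [inv_mul_le_iff₀ hqy, mul_comm] at h6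

lemma aux_h_int (n : ℕ) (q : (Fin n → ℝ) → ℝ) (hq : IsCostFun n q) (z : Fin n → ℂ)
    (hz : ∀ i, 0 < (z i).re) (t : ℝ) (ht : 0 < t) : IntegrableOn (aux_h n q z t) (posOrth n) := by
  obtain ⟨R, hR, hb⟩ := aux_bound n q hq
  have hg : Integrable (fun y : Fin n → ℝ =>
      ∏ i, (Ioc 0 (R * t)).indicator (fun u : ℝ => u ^ ((z i).re - 1)) (y i)) := by
    apply Integrable.fintype_prod (f := fun i (u : ℝ) =>
      (Ioc 0 (R * t)).indicator (fun u : ℝ => u ^ ((z i).re - 1)) u)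
    intro i
    rw [integrable_indicator_iff measurableSet_Ioc,
      ← intervalIntegrable_iff_integrableOn_Ioc_of_le (by positivity)]
    exact intervalIntegral.intervalIntegrable_rpow' (by linarith [hz i])
  refine ((hg.mul_const t).integrableOn (s := posOrth n)).mono' ?_ ?_
  · apply ContinuousOn.aestronglyMeasurable _ (aux_meas n)
    unfold aux_h
    refine (aux_w_cont n z).mul (Complex.continuous_ofReal.comp_continuousOn ?_)
    exact ContinuousOn.sup continuousOn_const (continuousOn_const.sub hq.1.continuousOn)
  · refine (ae_restrict_iff' (aux_meas n)).2 (Eventually.of_forall fun y hy => ?_)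
    have hqy := hq.2.1 y hy
    unfold aux_h
    rw [norm_mul, aux_w_norm n z y hy, Complex.norm_real, Real.norm_of_nonneg (le_max_left _ _)]
    by_cases h : q y ≤ t
    · have : ∀ i, y i ∈ Ioc 0 (R * t) := fun i =>
        ⟨hy i, (hb y hy i).trans (mul_le_mul_of_nonneg_left h hR.le)⟩
      simp only [indicator_of_mem (this _)]
      refine mul_le_mul_of_nonneg_left (max_le ht.le (by linarith)) ?_
      exact Finset.prod_nonneg fun i _ => Real.rpow_nonneg (hy i).le _
    · rw [max_eq_left (by linarith), mul_zero]
      refine mul_nonneg (Finset.prod_nonneg fun i _ => ?_) ht.le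
      exact indicator_nonneg (fun u hu => Real.rpow_nonneg hu.1.le _) _

lemma aux_cpow_sum {ι : Type*} (s : Finset ι) (z : ι → ℂ) {t : ℂ} (h0 : t ≠ 0) :
    t ^ (∑ i ∈ s, z i) = ∏ i ∈ s, t ^ z i := by
  classical
  induction s using Finset.induction_on with
  | empty => simp
  | insert a s ha ih => rw [Finset.sum_insert ha, Finset.prod_insert ha, Complex.cpow_add _ _ h0, ih]

lemma aux_w_const (n : ℕ) (z : Fin n → ℂ) (t : ℝ) (ht : 0 < t) :
    ((∏ _i : Fin n, t : ℝ) : ℂ) * (aux_w n z (fun _ => t) * t) = (t : ℂ) ^ ((∑ i, z i) + 1) := by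
  have h0 : (t : ℂ) ≠ 0 := by exact_mod_cast ht.ne'
  rw [Complex.cpow_add _ _ h0, Complex.cpow_one, ← mul_assoc]
  congr 1
  unfold aux_w
  rw [Complex.ofReal_prod, ← Finset.prod_mul_distrib, aux_cpow_sum _ _ h0]
  refine Finset.prod_congr rfl fun i _ => ?_
  rw [Complex.cpow_sub _ _ h0, Complex.cpow_one]
  field_simp

lemma aux_h_scale0 (n : ℕ) (q : (Fin n → ℝ) → ℝ) (hq : IsCostFun n q) (z : Fin n → ℂ)
    (t : ℝ) (ht : 0 < t) (y : Fin n → ℝ) (hy : y ∈ posOrth n) :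
    aux_h n q z t (fun i => t * y i) = (aux_w n z (fun _ => t) * t) * aux_h n q z 1 y := by
  unfold aux_h
  have h1 := aux_w_mul n z (fun _ => t) y (fun _ => ht) hy
  rw [h1, hq.2.2.1 t ht y hy]
  have : max 0 (t - t * q y) = t * max 0 (1 - q y) := by
    rw [mul_max_of_nonneg _ _ ht.le]; ring_nf
  rw [this]
  push_cast
  ring

lemma aux_h_scale (n : ℕ) (q : (Fin n → ℝ) → ℝ) (hq : IsCostFun n q) (z : Fin n → ℂ)
    (t : ℝ) (ht : 0 < t) :
    ∫ y in posOrth n, aux_h n q z t y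
      = (t : ℂ) ^ ((∑ i, z i) + 1) * ∫ y in posOrth n, aux_h n q z 1 y := by
  rw [(aux_cov n (fun _ => t) (fun _ => ht) (aux_h n q z t)).1,
    setIntegral_congr_fun (aux_meas n) (fun y hy => aux_h_scale0 n q hq z t ht y hy),
    integral_const_mul, ← aux_w_const n z t ht, Complex.real_smul]
  ring

lemma aux_h_scale_norm (n : ℕ) (q : (Fin n → ℝ) → ℝ) (hq : IsCostFun n q) (z : Fin n → ℂ)
    (t : ℝ) (ht : 0 < t) :
    ∫ y in posOrth n, ‖aux_h n q z t y‖
      = ‖(t : ℂ) ^ ((∑ i, z i) + 1)‖ * ∫ y in posOrth n, ‖aux_h n q z 1 y‖ := by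
  have hp : 0 < ∏ _i : Fin n, t := Finset.prod_pos fun _ _ => ht
  rw [(aux_cov n (fun _ => t) (fun _ => ht) (fun y => ‖aux_h n q z t y‖)).1,
    setIntegral_congr_fun (g := fun y => ‖aux_w n z (fun _ => t) * t‖ * ‖aux_h n q z 1 y‖)
      (aux_meas n) (fun y hy => by
      simp only []
      rw [aux_h_scale0 n q hq z t ht y hy, norm_mul]),
    integral_const_mul, ← aux_w_const n z t ht, norm_mul (Complex.ofReal _), Complex.norm_real (∏ _i, t),
    Real.norm_of_nonneg hp.le, smul_eq_mul]
  ring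

lemma aux_gamma (n : ℕ) (q : (Fin n → ℝ) → ℝ) (hq : IsCostFun n q) (z : Fin n → ℂ)
    (hz : ∀ i, 0 < (z i).re) :
    mellinT n (fun x => Real.exp (-q x)) z
      = Complex.Gamma ((∑ i, z i) + 2) * ∫ y in posOrth n, aux_h n q z 1 y := by
  have hs : 0 ≤ (∑ i, z i).re := by
    rw [Complex.re_sum]; exact Finset.sum_nonneg fun i _ => (hz i).le
  have hs2 : 0 < ((∑ i, z i) + 2).re := by
    rw [Complex.add_re]; norm_num; rw [← Complex.re_sum]; linarith
  have hsub : (∑ i, z i) + 2 - 1 = (∑ i, z i) + 1 := by ring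
  have hL : mellinT n (fun x => Real.exp (-q x)) z
      = ∫ y in posOrth n, ∫ t in Ioi (0:ℝ), ((Real.exp (-t) : ℝ) : ℂ) * aux_h n q z t y := by
    unfold mellinT
    refine setIntegral_congr_fun (aux_meas n) fun y hy => ?_
    simp only []
    rw [← aux_exp (q y) (hq.2.1 y hy), ← integral_complex_ofReal, ← integral_const_mul]
    refine integral_congr_ae (Eventually.of_forall fun t => ?_)
    simp only [aux_h, aux_w]
    push_cast
    ring
  have hconv := Complex.GammaIntegral_convergent hs2
  rw [hsub] at hconv
  rw [hL, aux_fub]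
  · rw [Complex.Gamma_eq_integral hs2, Complex.GammaIntegral, hsub, ← integral_mul_const]
    refine setIntegral_congr_fun measurableSet_Ioi fun t ht => ?_
    rw [integral_const_mul, aux_h_scale n q hq z t ht]
    ring
  · exact measurableSet_Ioi
  · apply ContinuousOn.aestronglyMeasurable _ ((aux_meas n).prod measurableSet_Ioi)
    unfold Function.uncurry aux_h
    refine ContinuousOn.mul ?_ (ContinuousOn.mul ?_ ?_)
    · fun_prop
    · exact (aux_w_cont n z).comp continuousOn_fst fun p hp => hp.1
    · refine Complex.continuous_ofReal.comp_continuousOn ?_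
      exact ContinuousOn.sup continuousOn_const (continuousOn_snd.sub
        (hq.1.continuousOn.comp continuousOn_fst fun p hp => hp.1))
  · intro t ht
    exact (aux_h_int n q hq z hz t ht).const_mul _
  · refine (hconv.norm.mul_const (∫ y in posOrth n, ‖aux_h n q z 1 y‖)).congr ?_
    refine (ae_restrict_iff' measurableSet_Ioi).2 (Eventually.of_forall fun t ht => ?_)
    simp only [norm_mul]
    rw [integral_const_mul, aux_h_scale_norm n q hq z t ht]
    ring

lemma aux_w_inv (n : ℕ) (z : Fin n → ℂ) (x : Fin n → ℝ) (hx : x ∈ posOrth n) :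
    aux_w n z x * aux_w n (fun i => 1 - z i) x * ((∏ i, x i : ℝ) : ℂ) = 1 := by
  unfold aux_w
  rw [Complex.ofReal_prod, ← Finset.prod_mul_distrib, ← Finset.prod_mul_distrib]
  refine Finset.prod_eq_one fun i _ => ?_
  have h0 : (x i : ℂ) ≠ 0 := by exact_mod_cast (hx i).ne'
  rw [← Complex.cpow_add _ _ h0]
  nth_rewrite 2 [← Complex.cpow_one (x i : ℂ)]
  rw [← Complex.cpow_add _ _ h0]
  ring_nf
  simp

/-- Mellin transform of the profit function: for `f ∈ L¹_{I-c}(ℝ^n_+) ∩ C(ℝ^n_+)`,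
`p₀ > 0` and every `z` with `Re z = c`, writing `s = z₁ + ⋯ + zₙ`,
`∫_{ℝ^n_+} p^{z-I} (Π_q f)(p₀,p) dp = p₀^{s+1} Γ(s+2)⁻¹ (Mf)(I-z) (M e^{-q})(z)`. -/
theorem mellin_Piq_eq
    (n : ℕ) (hn : 2 ≤ n) (q : (Fin n → ℝ) → ℝ) (hq : IsCostFun n q)
    (c : Fin n → ℝ) (hc : ∀ i, 0 < c i)
    (f : (Fin n → ℝ) → ℝ) (hf : MemL1w n (fun i => 1 - c i) f)
    (hfc : ContinuousOn f (posOrth n))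
    (p0 : ℝ) (hp0 : 0 < p0) :
    ∀ z : Fin n → ℂ, (∀ i, (z i).re = c i) →
      mellinT n (fun p => Piq n q f p0 p) z =
        (p0 : ℂ) ^ ((∑ i, z i) + 1) * (Complex.Gamma ((∑ i, z i) + 2))⁻¹ *
          mellinT n f (fun i => 1 - z i) *
          mellinT n (fun x => Real.exp (-q x)) z := by
  intro z hzc
  have hz : ∀ i, 0 < (z i).re := fun i => by rw [hzc i]; exact hc i
  have hs : 0 ≤ (∑ i, z i).re := by
    rw [Complex.re_sum]; exact Finset.sum_nonneg fun i _ => (hz i).le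
  have hs2 : 0 < ((∑ i, z i) + 2).re := by
    rw [Complex.add_re]; norm_num; rw [← Complex.re_sum]; linarith
  have hG := Complex.Gamma_ne_zero_of_re_pos hs2
  -- the kernel, with the scaling made explicit
  have hker : ∀ x ∈ posOrth n, ∀ p ∈ posOrth n,
      aux_w n z p * ((max 0 (p0 - q (fun i => p i * x i)) * f x : ℝ) : ℂ)
        = (aux_w n (fun i => 1 - z i) x * f x * ((∏ i, x i : ℝ) : ℂ)) *
          aux_h n q z p0 (fun i => x i * p i) := by
    intro x hx p hp
    have e1 : (fun i => p i * x i) = fun i => x i * p i := by funext i; ring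
    have e2 := aux_w_inv n z x hx
    unfold aux_h
    rw [aux_w_mul n z x p hx hp, e1]
    rw [Complex.ofReal_mul]
    linear_combination (-aux_w n z p * (max 0 (p0 - q (fun i => x i * p i)) : ℝ) * f x) * e2
  have hL : mellinT n (fun p => Piq n q f p0 p) z
      = ∫ p in posOrth n, ∫ x in posOrth n,
          aux_w n z p * ((max 0 (p0 - q (fun i => p i * x i)) * f x : ℝ) : ℂ) := by
    unfold mellinT Piq
    refine setIntegral_congr_fun (aux_meas n) fun p hp => ?_
    simp only []
    rw [← integral_complex_ofReal, ← integral_const_mul]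
    rfl
  have hfw : IntegrableOn (fun x => ‖aux_w n (fun i => 1 - z i) x * f x‖) (posOrth n) := by
    refine hf.norm.congr ?_
    refine (ae_restrict_iff' (aux_meas n)).2 (Eventually.of_forall fun x hx => ?_)
    simp only [norm_mul, Complex.norm_real]
    rw [aux_w_norm n _ x hx, Real.norm_of_nonneg (r := ∏ i, _)
      (Finset.prod_nonneg fun i _ => Real.rpow_nonneg (hx i).le _)]
    simp only [Complex.sub_re, Complex.one_re, hzc]
    ring
  rw [hL, aux_fub]
  · have : ∀ x ∈ posOrth n, ∫ p in posOrth n,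
          aux_w n z p * ((max 0 (p0 - q (fun i => p i * x i)) * f x : ℝ) : ℂ)
        = (aux_w n (fun i => 1 - z i) x * f x) * ∫ y in posOrth n, aux_h n q z p0 y := by
      intro x hx
      rw [setIntegral_congr_fun (aux_meas n) (hker x hx), integral_const_mul,
        (aux_cov n x hx (aux_h n q z p0)).1, Complex.real_smul]
      ring
    rw [setIntegral_congr_fun (aux_meas n) this, integral_mul_const,
      aux_h_scale n q hq z p0 hp0, aux_gamma n q hq z hz]
    have e : mellinT n f (fun i => 1 - z i)
        = ∫ x in posOrth n, aux_w n (fun i => 1 - z i) x * f x := rfl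
    rw [e]
    field_simp
  · exact aux_meas n
  · apply ContinuousOn.aestronglyMeasurable _ ((aux_meas n).prod (aux_meas n))
    unfold Function.uncurry
    refine ContinuousOn.mul ?_ (Complex.continuous_ofReal.comp_continuousOn
      (ContinuousOn.mul ?_ ?_))
    · exact (aux_w_cont n z).comp continuousOn_fst fun p hp => hp.1
    · refine ContinuousOn.sup continuousOn_const (continuousOn_const.sub ?_)
      refine hq.1.continuousOn.comp (f := fun a : (Fin n → ℝ) × (Fin n → ℝ) =>
        fun i => a.1 i * a.2 i) (Continuous.continuousOn (by fun_prop))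
        fun p hp i => mul_pos (hp.1 i) (hp.2 i)
    · exact hfc.comp continuousOn_snd fun p hp => hp.2
  · intro x hx
    refine IntegrableOn.congr_fun (((aux_cov n x hx (aux_h n q z p0)).2
      (aux_h_int n q hq z hz p0 hp0)).const_mul _) (fun p hp => (hker x hx p hp).symm) (aux_meas n)
  · refine (hfw.mul_const (∫ y in posOrth n, ‖aux_h n q z p0 y‖)).congr ?_
    refine (ae_restrict_iff' (aux_meas n)).2 (Eventually.of_forall fun x hx => ?_)
    have hp : 0 < ∏ i, x i := Finset.prod_pos fun i _ => hx i
    simp only []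
    rw [setIntegral_congr_fun (aux_meas n) (fun p hp => congrArg norm (hker x hx p hp)),
      (aux_cov n x hx (fun y => ‖aux_h n q z p0 y‖)).1]
    simp only [norm_mul]
    rw [integral_const_mul, Complex.norm_real (∏ i, x i), Real.norm_of_nonneg hp.le, smul_eq_mul]
    ring
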